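/- Let Σ = (PROP, ∅) be a hybrid signature without nominals, and consider the {↓}-fragment: hybrid formulas built from ⊥, propositions, world variables, ¬, ∨, ◇ and ↓ only. For a first-order formula φ(x) over Σ° in one free variable, the following are equivalent: (1) φ(x) is logically equivalent to the standard translation ST_x(ψ) of some hybrid sentence ψ of the {↓}-fragment; (2) φ(x) is invariant under quasi-injective bisimulations, i.e., whenever B is a quasi-injective bisimulation between Kripke structures M and N over Σ and (m, n) ∈ B, then M ⊨ φ[m] iff N ⊨ φ[n]. -/

import Mathlib

set_option autoImplicit false

/-! ## Hybrid logic: Kripke structures, hybrid formulas, satisfaction -/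

/-- A Kripke structure over a hybrid signature `Σ = (P, Nom)`:
`P` the propositional variables, `Nom` the nominals. -/
structure Kripke (P : Type) (Nom : Type) : Type 1 where
  W : Type
  R : W → W → Prop
  V : P → W → Prop
  nom : Nom → W

/-- Hybrid formulas over `Σ = (P, Nom)`; the world variables are the natural numbers.
`bind x φ` is `↓x φ`, `atv x φ` is `@_x φ`, `atn s φ` is `@_s φ`, `exq x φ` is `∃x φ`. -/
inductive HForm (P : Type) (Nom : Type) : Type
  | bot  : HForm P Nom
  | prop (p : P) : HForm P Nom
  | nom  (s : Nom) : HForm P Nom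
  | wvar (x : ℕ) : HForm P Nom
  | neg  (φ : HForm P Nom) : HForm P Nom
  | or   (φ ψ : HForm P Nom) : HForm P Nom
  | dia  (φ : HForm P Nom) : HForm P Nom
  | bind (x : ℕ) (φ : HForm P Nom) : HForm P Nom
  | atv  (x : ℕ) (φ : HForm P Nom) : HForm P Nom
  | atn  (s : Nom) (φ : HForm P Nom) : HForm P Nom
  | exq  (x : ℕ) (φ : HForm P Nom) : HForm P Nom

namespace HForm

/-- Conjunction, as an abbreviation `φ ∧ ψ := ¬(¬φ ∨ ¬ψ)`. -/
def and {P Nom : Type} (φ ψ : HForm P Nom) : HForm P Nom := .neg (.or (.neg φ) (.neg ψ))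

/-- Free world variables of a hybrid formula. -/
def free {P Nom : Type} : HForm P Nom → Set ℕ
  | .bot => ∅
  | .prop _ => ∅
  | .nom _ => ∅
  | .wvar x => {x}
  | .neg φ => φ.free
  | .or φ ψ => φ.free ∪ ψ.free
  | .dia φ => φ.free
  | .bind x φ => φ.free \ {x}
  | .atv x φ => insert x φ.free
  | .atn _ φ => φ.free
  | .exq x φ => φ.free \ {x}

/-- The degree of a hybrid formula. -/
def deg {P Nom : Type} : HForm P Nom → ℕ
  | .bot => 0
  | .prop _ => 0
  | .nom _ => 0
  | .wvar _ => 0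
  | .neg φ => φ.deg
  | .or φ ψ => max φ.deg ψ.deg
  | .dia φ => φ.deg + 1
  | .bind _ φ => φ.deg + 1
  | .atv _ φ => φ.deg
  | .atn _ φ => φ.deg
  | .exq _ φ => φ.deg + 1

end HForm

/-- The hybrid language features beyond basic modal logic: `@`, `↓`, `∃`, nominals. -/
inductive Feature : Type
  | at_ | bind | exq | nom
deriving DecidableEq

/-- Membership of a hybrid formula in the `F`-fragment: it uses only operators from `F`,
and nominals only if `Feature.nom ∈ F`. -/
def HForm.inFragment {P Nom : Type} (F : Set Feature) : HForm P Nom → Prop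
  | .bot => True
  | .prop _ => True
  | .nom _ => Feature.nom ∈ F
  | .wvar _ => True
  | .neg φ => φ.inFragment F
  | .or φ ψ => φ.inFragment F ∧ ψ.inFragment F
  | .dia φ => φ.inFragment F
  | .bind _ φ => Feature.bind ∈ F ∧ φ.inFragment F
  | .atv _ φ => Feature.at_ ∈ F ∧ φ.inFragment F
  | .atn _ φ => Feature.at_ ∈ F ∧ Feature.nom ∈ F ∧ φ.inFragment F
  | .exq _ φ => Feature.exq ∈ F ∧ φ.inFragment F

/-- Hybrid satisfaction `M, ν, m ⊩ φ`. -/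
def HSat {P Nom : Type} (M : Kripke P Nom) : (ℕ → M.W) → M.W → HForm P Nom → Prop
  | _, _, .bot => False
  | _, m, .prop p => M.V p m
  | _, m, .nom s => m = M.nom s
  | ν, m, .wvar x => m = ν x
  | ν, m, .neg φ => ¬ HSat M ν m φ
  | ν, m, .or φ ψ => HSat M ν m φ ∨ HSat M ν m ψ
  | ν, m, .dia φ => ∃ m', M.R m m' ∧ HSat M ν m' φ
  | ν, m, .bind x φ => HSat M (Function.update ν x m) m φ
  | ν, m, .atv x φ => HSat M ν (ν x) φ
  | ν, m, .atn s φ => HSat M ν (M.nom s) φ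
  | ν, m, .exq x φ => ∃ m' : M.W, HSat M (Function.update ν x m') m φ

/-- Satisfaction of a hybrid sentence: `M, m ⊩ φ` (the assignment is irrelevant). -/
def HSatS {P Nom : Type} (M : Kripke P Nom) (m : M.W) (φ : HForm P Nom) : Prop :=
  ∀ ν : ℕ → M.W, HSat M ν m φ

/-- `F`-elementary equivalence of pointed Kripke structures. -/
def FElemEquiv {P Nom : Type} (F : Set Feature) (M : Kripke P Nom) (m : M.W)
    (N : Kripke P Nom) (n : N.W) : Prop :=
  ∀ ψ : HForm P Nom, ψ.inFragment F → ψ.free = ∅ → (HSatS M m ψ ↔ HSatS N n ψ)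

/-! ## First-order logic over the corresponding signature `Σ°` -/

/-- First-order variables: the world variables `Sum.inl n` together with the two
designated variables `x = Sum.inr false` and `y = Sum.inr true`. -/
abbrev FVar : Type := ℕ ⊕ Bool

/-- First-order terms over `Σ°` with variables from `V`: variables and nominal constants. -/
inductive FOTerm (Nom V : Type) : Type
  | var (v : V)
  | nom (s : Nom)

/-- First-order formulas over `Σ°` (one binary relation `R`, a unary predicate for each
propositional variable, a constant for each nominal), with variables from `V`. -/
inductive FOForm (P Nom V : Type) : Type
  | bot
  | pred (p : P) (t : FOTerm Nom V)
  | rel (t u : FOTerm Nom V)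
  | eq (t u : FOTerm Nom V)
  | neg (φ : FOForm P Nom V)
  | or (φ ψ : FOForm P Nom V)
  | ex (v : V) (φ : FOForm P Nom V)

/-- First-order conjunction, `φ ∧ ψ := ¬(¬φ ∨ ¬ψ)`. -/
def FOForm.and {P Nom V : Type} (φ ψ : FOForm P Nom V) : FOForm P Nom V :=
  .neg (.or (.neg φ) (.neg ψ))

/-- Value of a term under an assignment, in a Kripke structure viewed as a `Σ°`-structure. -/
def FOTerm.val {P Nom V : Type} (M : Kripke P Nom) (g : V → M.W) : FOTerm Nom V → M.W
  | .var v => g v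
  | .nom s => M.nom s

/-- First-order satisfaction in a Kripke structure viewed as a `Σ°`-structure. -/
def FOSat {P Nom V : Type} [DecidableEq V] (M : Kripke P Nom) (g : V → M.W) :
    FOForm P Nom V → Prop
  | .bot => False
  | .pred p t => M.V p (t.val M g)
  | .rel t u => M.R (t.val M g) (u.val M g)
  | .eq t u => t.val M g = u.val M g
  | .neg φ => ¬ FOSat M g φ
  | .or φ ψ => FOSat M g φ ∨ FOSat M g ψ
  | .ex v φ => ∃ w : M.W, FOSat M (Function.update g v w) φ

/-- Variables of a first-order term. -/
def FOTerm.fvars {Nom V : Type} : FOTerm Nom V → Set V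
  | .var v => {v}
  | .nom _ => ∅

/-- Free variables of a first-order formula. -/
def FOForm.free {P Nom V : Type} : FOForm P Nom V → Set V
  | .bot => ∅
  | .pred _ t => t.fvars
  | .rel t u => t.fvars ∪ u.fvars
  | .eq t u => t.fvars ∪ u.fvars
  | .neg φ => φ.free
  | .or φ ψ => φ.free ∪ ψ.free
  | .ex v φ => φ.free \ {v}

/-- The standard translation `stdTr b φ`; `b : Bool` chooses the current designated
variable (`false` for `x`, `true` for `y`). -/
def stdTr {P Nom : Type} : Bool → HForm P Nom → FOForm P Nom FVar
  | b, .bot => .bot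
  | b, .prop p => .pred p (.var (Sum.inr b))
  | b, .nom s => .eq (.nom s) (.var (Sum.inr b))
  | b, .wvar z => .eq (.var (Sum.inl z)) (.var (Sum.inr b))
  | b, .neg φ => .neg (stdTr b φ)
  | b, .or φ ψ => .or (stdTr b φ) (stdTr b ψ)
  | b, .dia φ => .ex (Sum.inr (!b))
      (FOForm.and (.rel (.var (Sum.inr b)) (.var (Sum.inr (!b)))) (stdTr (!b) φ))
  | b, .bind z φ => .ex (Sum.inl z)
      (FOForm.and (.eq (.var (Sum.inl z)) (.var (Sum.inr b))) (stdTr b φ))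
  | b, .atv z φ => .ex (Sum.inr (!b))
      (FOForm.and (.eq (.var (Sum.inr (!b))) (.var (Sum.inl z))) (stdTr (!b) φ))
  | b, .atn s φ => .ex (Sum.inr (!b))
      (FOForm.and (.eq (.var (Sum.inr (!b))) (.nom s)) (stdTr (!b) φ))
  | b, .exq z φ => .ex (Sum.inl z) (stdTr b φ)

/-- `M ⊨ φ[m]`: satisfaction of a first-order formula whose free variable is the
designated variable `x = Sum.inr false`, under the assignment sending `x` to `m`. -/
def FOSatAt {P Nom : Type} (M : Kripke P Nom) (m : M.W) (φ : FOForm P Nom FVar) : Prop :=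
  ∀ g : FVar → M.W, g (Sum.inr false) = m → FOSat M g φ

/-! ## Bisimulations -/

/-- Ordinary bisimulations between Kripke structures. -/
def IsBisim {P Nom : Type} (M N : Kripke P Nom) (B : M.W → N.W → Prop) : Prop :=
  ∀ m n, B m n →
    (∀ p, M.V p m ↔ N.V p n) ∧
    (∀ m', M.R m m' → ∃ n', N.R n n' ∧ B m' n') ∧
    (∀ n', N.R n n' → ∃ m', M.R m m' ∧ B m' n')

/-- Quasi-injectivity of a bisimulation. -/
def QuasiInjective {P Nom : Type} (M N : Kripke P Nom) (B : M.W → N.W → Prop) : Prop :=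
  (∀ m n n', B m n → B m n' → n ≠ n' →
     ¬ Relation.ReflTransGen N.R n n' ∧ ¬ Relation.ReflTransGen N.R n' n) ∧
  (∀ m m' n, B m n → B m' n → m ≠ m' →
     ¬ Relation.ReflTransGen M.R m m' ∧ ¬ Relation.ReflTransGen M.R m' m)

/-- The type of relations `B_k ⊆ (M^k × M) × (N^k × N)`. -/
abbrev KRel {P Nom : Type} (M N : Kripke P Nom) (k : ℕ) : Type :=
  (Fin k → M.W) → M.W → (Fin k → N.W) → N.W → Prop

section BisimConds

variable {P Nom : Type} (M N : Kripke P Nom) {k : ℕ}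

/-- Condition (prop). -/
def PropCond (B : KRel M N k) : Prop :=
  ∀ mb m nb n, B mb m nb n → ∀ p, M.V p m ↔ N.V p n

/-- Condition (wvar). -/
def WvarCond (B : KRel M N k) : Prop :=
  ∀ mb m nb n, B mb m nb n → ∀ j : Fin k, mb j = m ↔ nb j = n

/-- Condition (forth). -/
def ForthCond (B : KRel M N k) : Prop :=
  ∀ mb m nb n, B mb m nb n → ∀ m', M.R m m' → ∃ n', N.R n n' ∧ B mb m' nb n'

/-- Condition (back). -/
def BackCond (B : KRel M N k) : Prop :=
  ∀ mb m nb n, B mb m nb n → ∀ n', N.R n n' → ∃ m', M.R m m' ∧ B mb m' nb n'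

/-- Condition (nom). -/
def NomCond (B : KRel M N k) : Prop :=
  ∀ mb m nb n, B mb m nb n → ∀ s : Nom, m = M.nom s ↔ n = N.nom s

/-- Condition (atv). -/
def AtvCond (B : KRel M N k) : Prop :=
  ∀ mb m nb n, B mb m nb n → ∀ j : Fin k, B mb (mb j) nb (nb j)

/-- Condition (atn). -/
def AtnCond (B : KRel M N k) : Prop :=
  ∀ mb m nb n, B mb m nb n → ∀ s : Nom, B mb (M.nom s) nb (N.nom s)

/-- Condition (bind). -/
def BindCond (B : KRel M N k) : Prop :=
  ∀ mb m nb n, B mb m nb n → ∀ j : Fin k,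
    B (Function.update mb j m) m (Function.update nb j n) n

/-- Condition (ex). -/
def ExCond (B : KRel M N k) : Prop :=
  ∀ mb m nb n, B mb m nb n → ∀ j : Fin k,
    (∀ u : M.W, ∃ u' : N.W, B (Function.update mb j u) m (Function.update nb j u') n) ∧
    (∀ u' : N.W, ∃ u : M.W, B (Function.update mb j u) m (Function.update nb j u') n)

/-- A `k`-bisimulation: conditions (prop), (wvar), (forth), (back). -/
def IsKBisim (B : KRel M N k) : Prop :=
  PropCond M N B ∧ WvarCond M N B ∧ ForthCond M N B ∧ BackCond M N B

/-- The conditions `cond(F)` for a feature set `F`, for a single relation `B_k`. -/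
def SatisfiesConds (F : Set Feature) (B : KRel M N k) : Prop :=
  (Feature.nom ∈ F → NomCond M N B) ∧
  (Feature.bind ∈ F → BindCond M N B) ∧
  (Feature.at_ ∈ F → AtvCond M N B) ∧
  (Feature.exq ∈ F → ExCond M N B) ∧
  (Feature.at_ ∈ F → Feature.nom ∈ F → AtnCond M N B)

end BisimConds

/-- An `F`-ω-bisimulation: a non-empty family `(B_k)` of `k`-bisimulations satisfying
(ext) and all the conditions in `cond(F)`. -/
def IsFOmegaBisim {P Nom : Type} (F : Set Feature) (M N : Kripke P Nom)
    (B : (k : ℕ) → KRel M N k) : Prop :=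
  (∀ k, IsKBisim M N (B k)) ∧
  (∃ k mb m nb n, B k mb m nb n) ∧
  (∀ k (mb : Fin k → M.W) m nb n, B k mb m nb n →
     B (k+1) (Fin.snoc mb m) m (Fin.snoc nb n) n) ∧
  (∀ k, SatisfiesConds M N F (B (k : ℕ)))

/-! ## `(k,ℓ)`- and `(ω,ℓ)`-bisimulations -/

section KL

variable {P Nom : Type} (M N : Kripke P Nom)

/-- A basic `(k,ℓ)`-bisimulation from `M` to `N` (the relations `Z i` for `i ≤ ℓ`). -/
def IsBasicKLBisim (k ℓ : ℕ) (Z : ℕ → KRel M N k) : Prop :=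
  (∀ i ≤ ℓ, PropCond M N (Z i) ∧ WvarCond M N (Z i)) ∧
  (∀ i, 0 < i → i ≤ ℓ → ∀ mb m nb n, Z (i-1) mb m nb n →
    (∀ u, M.R m u → ∃ u', N.R n u' ∧ Z i mb u nb u') ∧
    (∀ u', N.R n u' → ∃ u, M.R m u ∧ Z i mb u nb u'))

/-- The conditions `cond(F)` for a `(k,ℓ)`-bisimulation: (nom), (atv), (atn) are
required within each `Z i` (`i ≤ ℓ`), whereas (bind) and (ex) pass from `Z (i-1)`
to `Z i` for `0 < i ≤ ℓ`. -/
def KLSatisfiesConds (F : Set Feature) (k ℓ : ℕ) (Z : ℕ → KRel M N k) : Prop :=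
  (Feature.nom ∈ F → ∀ i ≤ ℓ, NomCond M N (Z i)) ∧
  (Feature.at_ ∈ F → ∀ i ≤ ℓ, AtvCond M N (Z i)) ∧
  (Feature.at_ ∈ F → Feature.nom ∈ F → ∀ i ≤ ℓ, AtnCond M N (Z i)) ∧
  (Feature.bind ∈ F → ∀ i, 0 < i → i ≤ ℓ → ∀ mb m nb n, Z (i-1) mb m nb n →
     ∀ j : Fin k, Z i (Function.update mb j m) m (Function.update nb j n) n) ∧
  (Feature.exq ∈ F → ∀ i, 0 < i → i ≤ ℓ → ∀ mb m nb n, Z (i-1) mb m nb n →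
     ∀ j : Fin k,
       (∀ u : M.W, ∃ u' : N.W, Z i (Function.update mb j u) m (Function.update nb j u') n) ∧
       (∀ u' : N.W, ∃ u : M.W, Z i (Function.update mb j u) m (Function.update nb j u') n))

/-- An `F`-`(k,ℓ)`-bisimulation. -/
def IsFKLBisim (F : Set Feature) (k ℓ : ℕ) (Z : ℕ → KRel M N k) : Prop :=
  IsBasicKLBisim M N k ℓ Z ∧ KLSatisfiesConds M N F k ℓ Z

/-- An `F`-`(ω,ℓ)`-bisimulation: a system `(Z^k_i)_{i ≤ ℓ, k ∈ ω}` of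
`F`-`(k,ℓ)`-bisimulations satisfying the extensibility condition (ext). -/
def IsFOmegaLBisim (F : Set Feature) (ℓ : ℕ)
    (Z : (k : ℕ) → ℕ → KRel M N k) : Prop :=
  (∀ k, IsFKLBisim M N F k ℓ (Z k)) ∧
  (∀ k i, 0 < i → i ≤ ℓ → ∀ (mb : Fin k → M.W) m nb n, Z k (i-1) mb m nb n →
     Z (k+1) i (Fin.snoc mb m) m (Fin.snoc nb n) n)

end KL
namespace HT
open Relation Filter

/-! ### Basic facts -/

def props {P : Type} : FOForm P Empty FVar → List P
  | .bot => []
  | .pred p _ => [p]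
  | .rel _ _ => []
  | .eq _ _ => []
  | .neg φ => props φ
  | .or φ ψ => props φ ++ props ψ
  | .ex _ φ => props φ

abbrev restr {P : Type} (Q : List P) (M : Kripke P Empty) : Kripke P Empty where
  W := M.W
  R := M.R
  V := fun p w => p ∈ Q ∧ M.V p w
  nom := M.nom

theorem val_restr {P : Type} (Q : List P) (M : Kripke P Empty) (g : FVar → M.W)
    (t : FOTerm Empty FVar) : t.val (restr Q M) g = t.val M g := by
  cases t with
  | var v => rfl
  | nom s => exact s.elim

theorem fosat_restr {P : Type} (Q : List P) (M : Kripke P Empty) (φ : FOForm P Empty FVar) :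
    ∀ (g : FVar → M.W), (∀ p ∈ props φ, p ∈ Q) → (FOSat (restr Q M) g φ ↔ FOSat M g φ) := by
  induction φ with
  | bot => intro g _; exact Iff.rfl
  | pred p t =>
    intro g h
    have : p ∈ Q := h p (by simp [props])
    simp only [FOSat, val_restr]
    exact ⟨fun h => h.2, fun h => ⟨this, h⟩⟩
  | rel t u => intro g h; simp only [FOSat, val_restr]
  | eq t u => intro g h; simp only [FOSat, val_restr]
  | neg φ ih => intro g h; simp only [FOSat]; rw [ih g h]
  | or φ ψ ih1 ih2 =>
    intro g h
    simp only [FOSat]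
    rw [ih1 g (fun p hp => h p (by simp [props, hp])),
      ih2 g (fun p hp => h p (by simp [props, hp]))]
  | ex v φ ih =>
    intro g h
    simp only [FOSat]
    exact exists_congr fun w => ih _ h

theorem val_congr {P : Type} (M : Kripke P Empty) (g g' : FVar → M.W)
    (t : FOTerm Empty FVar) (h : ∀ v ∈ t.fvars, g v = g' v) : t.val M g = t.val M g' := by
  cases t with
  | var v => exact h v rfl
  | nom s => exact s.elim

theorem fosat_congr {P : Type} (M : Kripke P Empty) (φ : FOForm P Empty FVar) :
    ∀ (g g' : FVar → M.W), (∀ v ∈ φ.free, g v = g' v) → (FOSat M g φ ↔ FOSat M g' φ) := by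
  induction φ with
  | bot => intro g g' _; exact Iff.rfl
  | pred p t =>
    intro g g' h
    simp only [FOSat]
    rw [val_congr M g g' t h]
  | rel t u =>
    intro g g' h
    simp only [FOSat]
    rw [val_congr M g g' t (fun v hv => h v (Or.inl hv)),
      val_congr M g g' u (fun v hv => h v (Or.inr hv))]
  | eq t u =>
    intro g g' h
    simp only [FOSat]
    rw [val_congr M g g' t (fun v hv => h v (Or.inl hv)),
      val_congr M g g' u (fun v hv => h v (Or.inr hv))]
  | neg φ ih => intro g g' h; simp only [FOSat]; rw [ih g g' h]
  | or φ ψ ih1 ih2 =>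
    intro g g' h
    simp only [FOSat]
    rw [ih1 g g' (fun v hv => h v (Or.inl hv)), ih2 g g' (fun v hv => h v (Or.inr hv))]
  | ex v φ ih =>
    intro g g' h
    simp only [FOSat]
    refine exists_congr fun w => ih _ _ ?_
    intro u hu
    by_cases huv : u = v
    · subst huv; simp
    · simp only [Function.update_of_ne huv]
      exact h u ⟨hu, huv⟩

theorem free_finite {P : Type} (φ : FOForm P Empty FVar) : φ.free.Finite := by
  have ht : ∀ t : FOTerm Empty FVar, t.fvars.Finite := by
    intro t
    cases t with
    | var v => exact Set.finite_singleton v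
    | nom s => exact s.elim
  induction φ with
  | bot => exact Set.finite_empty
  | pred p t => exact ht t
  | rel t u => exact (ht t).union (ht u)
  | eq t u => exact (ht t).union (ht u)
  | neg φ ih => exact ih
  | or φ ψ ih1 ih2 => exact ih1.union ih2
  | ex v φ ih => exact ih.subset Set.diff_subset

theorem fosat_and {P : Type} (M : Kripke P Empty) (g : FVar → M.W)
    (φ ψ : FOForm P Empty FVar) : FOSat M g (φ.and ψ) ↔ FOSat M g φ ∧ FOSat M g ψ := by
  simp only [FOForm.and, FOSat]; tauto

theorem hsat_and {P : Type} (M : Kripke P Empty) (ν : ℕ → M.W) (m : M.W)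
    (φ ψ : HForm P Empty) : HSat M ν m (φ.and ψ) ↔ HSat M ν m φ ∧ HSat M ν m ψ := by
  simp only [HForm.and, HSat]; tauto

theorem upd_inl {W : Type} (g : FVar → W) (b : Bool) (w : W) :
    (fun i => Function.update g (Sum.inr b) w (Sum.inl i)) = fun i => g (Sum.inl i) := by
  funext i; simp

theorem upd_inl' {W : Type} (g : FVar → W) (z : ℕ) (w : W) :
    (fun i => Function.update g (Sum.inl z) w (Sum.inl i))
      = Function.update (fun i => g (Sum.inl i)) z w := by
  funext i
  by_cases h : i = z
  · subst h; simp
  · simp [Function.update_of_ne h]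

theorem hsat_std {P : Type} (M : Kripke P Empty) (ψ : HForm P Empty) :
    ∀ (b : Bool) (g : FVar → M.W),
      FOSat M g (stdTr b ψ) ↔ HSat M (fun i => g (.inl i)) (g (.inr b)) ψ := by
  induction ψ with
  | bot => intro b g; simp [stdTr, FOSat, HSat]
  | prop p => intro b g; simp [stdTr, FOSat, HSat, FOTerm.val]
  | nom s => exact s.elim
  | wvar x => intro b g; simp [stdTr, FOSat, HSat, FOTerm.val, eq_comm]
  | neg φ ih => intro b g; simp only [stdTr, FOSat, HSat]; rw [ih]
  | or φ ψ ih1 ih2 => intro b g; simp only [stdTr, FOSat, HSat]; rw [ih1, ih2]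
  | dia φ ih =>
    intro b g
    simp only [stdTr, FOSat, HSat, fosat_and, ih, upd_inl, FOTerm.val]
    refine exists_congr fun w => ?_
    have : (Sum.inr b : FVar) ≠ Sum.inr (!b) := by cases b <;> simp
    simp [Function.update_of_ne this]
  | bind x φ ih =>
    intro b g
    simp only [stdTr, FOSat, HSat, fosat_and, ih, upd_inl', FOTerm.val]
    simp
  | atv x φ ih =>
    intro b g
    simp only [stdTr, FOSat, HSat, fosat_and, ih, upd_inl, FOTerm.val]
    simp
  | atn s φ ih => exact s.elim
  | exq x φ ih =>
    intro b g
    simp only [stdTr, FOSat, HSat, ih, upd_inl']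
    simp

theorem hsat_inv {P : Type} (M N : Kripke P Empty) (B : M.W → N.W → Prop)
    (hB : IsBisim M N B) (hq : QuasiInjective M N B) (ψ : HForm P Empty) :
    ψ.inFragment {Feature.bind} → ∀ (ν : ℕ → M.W) (μ : ℕ → N.W) m n, B m n →
    (∀ x ∈ ψ.free, B (ν x) (μ x) ∧ ReflTransGen M.R (ν x) m ∧ ReflTransGen N.R (μ x) n) →
    (HSat M ν m ψ ↔ HSat N μ n ψ) := by
  induction ψ with
  | bot => intros; exact Iff.rfl
  | prop p => intro _ ν μ m n h _; exact (hB m n h).1 p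
  | nom s => exact s.elim
  | wvar x =>
    intro _ ν μ m n h hx
    obtain ⟨h1, h2, h3⟩ := hx x rfl
    simp only [HSat]
    constructor
    · intro e
      by_contra hne
      rw [← e] at h1
      exact (hq.1 m n (μ x) h h1 hne).2 h3
    · intro e
      by_contra hne
      rw [← e] at h1
      exact (hq.2 m (ν x) n h h1 hne).2 h2
  | neg φ ih =>
    intro hf ν μ m n h hx
    simp only [HSat]
    rw [ih hf ν μ m n h hx]
  | or φ ψ ih1 ih2 =>
    intro hf ν μ m n h hx
    simp only [HSat]
    rw [ih1 hf.1 ν μ m n h (fun x h => hx x (Or.inl h)),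
      ih2 hf.2 ν μ m n h (fun x h => hx x (Or.inr h))]
  | dia φ ih =>
    intro hf ν μ m n h hx
    simp only [HSat]
    constructor
    · rintro ⟨m', hr, hs⟩
      obtain ⟨n', hr', hb⟩ := (hB m n h).2.1 m' hr
      refine ⟨n', hr', (ih hf ν μ m' n' hb ?_).1 hs⟩
      intro x hxf
      obtain ⟨h1, h2, h3⟩ := hx x hxf
      exact ⟨h1, h2.tail hr, h3.tail hr'⟩
    · rintro ⟨n', hr', hs⟩
      obtain ⟨m', hr, hb⟩ := (hB m n h).2.2 n' hr'
      refine ⟨m', hr, (ih hf ν μ m' n' hb ?_).2 hs⟩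
      intro x hxf
      obtain ⟨h1, h2, h3⟩ := hx x hxf
      exact ⟨h1, h2.tail hr, h3.tail hr'⟩
  | bind z φ ih =>
    intro hf ν μ m n h hx
    simp only [HSat]
    apply ih hf.2 _ _ m n h
    intro x hxf
    by_cases hxz : x = z
    · subst hxz
      simp only [Function.update_self]
      exact ⟨h, .refl, .refl⟩
    · simp only [Function.update_of_ne hxz]
      exact hx x ⟨hxf, hxz⟩
  | atv x φ ih =>
    intro hf
    have := hf.1
    simp at this
  | atn s φ ih => exact s.elim
  | exq x φ ih =>
    intro hf
    have := hf.1
    simp at this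

/-! ### Finite approximations -/

def Zbase {P : Type} (Q : List P) (M N : Kripke P Empty) (h : List (M.W × N.W))
    (m : M.W) (n : N.W) : Prop :=
  (∀ p ∈ Q, M.V p m ↔ N.V p n) ∧ ∀ ab ∈ h, ab.1 = m ↔ ab.2 = n

def Zapp {P : Type} (Q : List P) (M N : Kripke P Empty) :
    ℕ → List (M.W × N.W) → M.W → N.W → Prop
  | 0, h, m, n => Zbase Q M N h m n
  | l + 1, h, m, n => Zbase Q M N h m n ∧
      (∀ m', M.R m m' → ∃ n', N.R n n' ∧ Zapp Q M N l h m' n') ∧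
      (∀ n', N.R n n' → ∃ m', M.R m m' ∧ Zapp Q M N l h m' n') ∧
      Zapp Q M N l ((m, n) :: h) m n

theorem Zapp.base {P : Type} {Q : List P} {M N : Kripke P Empty} {l : ℕ}
    {h : List (M.W × N.W)} {m : M.W} {n : N.W} (hz : Zapp Q M N l h m n) :
    Zbase Q M N h m n := by
  cases l with
  | zero => exact hz
  | succ l => exact hz.1

def types {P : Type} : List (HForm P Empty) → List (HForm P Empty)
  | [] => [.neg .bot]
  | γ :: Γ => (types Γ).flatMap fun t => [γ.and t, (HForm.neg γ).and t]

theorem types_exists {P : Type} (M : Kripke P Empty) (ν : ℕ → M.W) (m : M.W)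
    (Γ : List (HForm P Empty)) : ∃ t ∈ types Γ, HSat M ν m t := by
  induction Γ with
  | nil => exact ⟨_, List.mem_singleton.2 rfl, fun h => h⟩
  | cons γ Γ ih =>
    obtain ⟨t, ht, hs⟩ := ih
    by_cases h : HSat M ν m γ
    · exact ⟨γ.and t, List.mem_flatMap.2 ⟨t, ht, by simp⟩, (hsat_and ..).2 ⟨h, hs⟩⟩
    · exact ⟨(HForm.neg γ).and t, List.mem_flatMap.2 ⟨t, ht, by simp⟩, (hsat_and ..).2 ⟨h, hs⟩⟩

theorem types_agree {P : Type} (M N : Kripke P Empty) (ν : ℕ → M.W) (m : M.W)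
    (μ : ℕ → N.W) (n : N.W) (Γ : List (HForm P Empty)) :
    ∀ t ∈ types Γ, HSat M ν m t → HSat N μ n t →
      ∀ γ ∈ Γ, (HSat M ν m γ ↔ HSat N μ n γ) := by
  induction Γ with
  | nil => intro t _ _ _ γ hγ; simp at hγ
  | cons γ Γ ih =>
    intro t ht h1 h2 δ hδ
    obtain ⟨t', ht', hc⟩ := List.mem_flatMap.1 ht
    simp only [List.mem_cons, List.not_mem_nil, or_false] at hc
    rcases hc with rfl | rfl
    · rw [hsat_and] at h1 h2
      rcases List.mem_cons.1 hδ with rfl | hδ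
      · exact iff_of_true h1.1 h2.1
      · exact ih t' ht' h1.2 h2.2 δ hδ
    · rw [hsat_and] at h1 h2
      rcases List.mem_cons.1 hδ with rfl | hδ
      · exact iff_of_false h1.1 h2.1
      · exact ih t' ht' h1.2 h2.2 δ hδ

def Gam {P : Type} (Q : List P) : ℕ → ℕ → List (HForm P Empty)
  | 0, k => Q.map .prop ++ (List.range k).map .wvar
  | l + 1, k => (Q.map .prop ++ (List.range k).map .wvar) ++
      ((types (Gam Q l k)).map .dia ++ (Gam Q l (k + 1)).map (.bind k))

def Good {P : Type} (k : ℕ) (γ : HForm P Empty) : Prop :=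
  γ.inFragment {Feature.bind} ∧ γ.free ⊆ {i | i < k}

theorem good_types {P : Type} (k : ℕ) (Γ : List (HForm P Empty)) (h : ∀ γ ∈ Γ, Good k γ) :
    ∀ t ∈ types Γ, Good k t := by
  induction Γ with
  | nil =>
    intro t ht
    rw [List.mem_singleton.1 ht]
    exact ⟨trivial, by simp [HForm.free]⟩
  | cons γ Γ ih =>
    intro t ht
    obtain ⟨t', ht', hc⟩ := List.mem_flatMap.1 ht
    have h1 := ih (fun γ hγ => h γ (List.mem_cons_of_mem _ hγ)) t' ht'
    have h2 := h γ (by simp)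
    simp only [List.mem_cons, List.not_mem_nil, or_false] at hc
    rcases hc with rfl | rfl
    · exact ⟨⟨h2.1, h1.1⟩, Set.union_subset h2.2 h1.2⟩
    · exact ⟨⟨h2.1, h1.1⟩, Set.union_subset h2.2 h1.2⟩

theorem good_Gam {P : Type} (Q : List P) : ∀ l k, ∀ γ ∈ Gam Q l k, Good k γ := by
  have base : ∀ k, ∀ γ ∈ (Q.map .prop ++ (List.range k).map .wvar : List (HForm P Empty)),
      Good k γ := by
    intro k γ hγ
    rcases List.mem_append.1 hγ with hγ | hγ
    · obtain ⟨p, _, rfl⟩ := List.mem_map.1 hγ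
      exact ⟨trivial, by simp [HForm.free]⟩
    · obtain ⟨i, hi, rfl⟩ := List.mem_map.1 hγ
      exact ⟨trivial, by simpa [HForm.free] using hi⟩
  intro l
  induction l with
  | zero => exact base
  | succ l ih =>
    intro k γ hγ
    rcases List.mem_append.1 hγ with hγ | hγ
    · exact base k γ hγ
    · rcases List.mem_append.1 hγ with hγ | hγ
      · obtain ⟨t, ht, rfl⟩ := List.mem_map.1 hγ
        exact good_types k _ (ih k) t ht
      · obtain ⟨t, ht, rfl⟩ := List.mem_map.1 hγ
        obtain ⟨h1, h2⟩ := ih _ t ht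
        refine ⟨⟨rfl, h1⟩, ?_⟩
        rintro x ⟨hx, hxk⟩
        have := h2 hx
        simp only [Set.mem_setOf_eq, Set.mem_singleton_iff] at this hxk ⊢
        omega

theorem agree_Zapp {P : Type} (Q : List P) (M N : Kripke P Empty) :
    ∀ (l : ℕ) (h : List (M.W × N.W)) (ν : ℕ → M.W) (μ : ℕ → N.W) (m : M.W) (n : N.W),
      (∀ ab ∈ h, ∃ i < h.length, ν i = ab.1 ∧ μ i = ab.2) →
      (∀ γ ∈ Gam Q l h.length, (HSat M ν m γ ↔ HSat N μ n γ)) → Zapp Q M N l h m n := by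
  have base : ∀ (h : List (M.W × N.W)) (ν : ℕ → M.W) (μ : ℕ → N.W) (m : M.W) (n : N.W),
      (∀ ab ∈ h, ∃ i < h.length, ν i = ab.1 ∧ μ i = ab.2) →
      (∀ γ ∈ (Q.map .prop ++ (List.range h.length).map .wvar : List (HForm P Empty)),
        (HSat M ν m γ ↔ HSat N μ n γ)) → Zbase Q M N h m n := by
    intro h ν μ m n hag hΓ
    refine ⟨fun p hp => hΓ (.prop p) (by simp [hp]), ?_⟩
    intro ab hab
    obtain ⟨i, hi, h1, h2⟩ := hag ab hab
    have := hΓ (.wvar i) (by simp [hi])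
    simp only [HSat] at this
    rw [← h1, ← h2, eq_comm, this, eq_comm]
  intro l
  induction l with
  | zero => intro h ν μ m n hag hΓ; exact base h ν μ m n hag hΓ
  | succ l ih =>
    intro h ν μ m n hag hΓ
    refine ⟨base h ν μ m n hag fun γ hγ => hΓ γ (List.mem_append_left _ hγ), ?_, ?_, ?_⟩
    · intro m' hr
      obtain ⟨t, ht, hs⟩ := types_exists M ν m' (Gam Q l h.length)
      have := (hΓ (.dia t) (List.mem_append_right _ (List.mem_append_left _
        (List.mem_map_of_mem ht)))).1 ⟨m', hr, hs⟩
      obtain ⟨n', hr', hs'⟩ := this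
      exact ⟨n', hr', ih h ν μ m' n' hag (types_agree M N ν m' μ n' _ t ht hs hs')⟩
    · intro n' hr'
      obtain ⟨t, ht, hs'⟩ := types_exists N μ n' (Gam Q l h.length)
      have := (hΓ (.dia t) (List.mem_append_right _ (List.mem_append_left _
        (List.mem_map_of_mem ht)))).2 ⟨n', hr', hs'⟩
      obtain ⟨m', hr, hs⟩ := this
      exact ⟨m', hr, ih h ν μ m' n' hag (types_agree M N ν m' μ n' _ t ht hs hs')⟩
    · apply ih _ (Function.update ν h.length m) (Function.update μ h.length n)
      · intro ab hab
        rcases List.mem_cons.1 hab with rfl | hab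
        · exact ⟨h.length, by simp, by simp⟩
        · obtain ⟨i, hi, h1, h2⟩ := hag ab hab
          refine ⟨i, by simp; omega, ?_⟩
          simp only [Function.update_of_ne (Nat.ne_of_lt hi)]
          exact ⟨h1, h2⟩
      · intro γ hγ
        exact hΓ (.bind h.length γ) (List.mem_append_right _ (List.mem_append_right _
          (List.mem_map_of_mem hγ)))

/-! ### Back-and-forth systems with history -/

structure IsZ {P : Type} (Q : List P) (M N : Kripke P Empty)
    (Z : List (M.W × N.W) → M.W → N.W → Prop) : Prop where
  prop : ∀ h m n, Z h m n → ∀ p ∈ Q, M.V p m ↔ N.V p n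
  wvar : ∀ h m n, Z h m n → ∀ a b, (a, b) ∈ h → (a = m ↔ b = n)
  forth : ∀ h m n, Z h m n → ∀ m', M.R m m' → ∃ n', N.R n n' ∧ Z h m' n'
  back : ∀ h m n, Z h m n → ∀ n', N.R n n' → ∃ m', M.R m m' ∧ Z h m' n'
  bind : ∀ h m n, Z h m n → Z ((m, n) :: h) m n

namespace IsZ
variable {P : Type} {Q : List P} {M N : Kripke P Empty}
  {Z : List (M.W × N.W) → M.W → N.W → Prop}

theorem forth' (hZ : IsZ Q M N Z) {h m n m'} (hz : Z h m n) (hr : ReflTransGen M.R m m') :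
    ∃ n', ReflTransGen N.R n n' ∧ Z h m' n' := by
  induction hr with
  | refl => exact ⟨n, .refl, hz⟩
  | tail _ hr ih =>
    obtain ⟨n', h1, h2⟩ := ih
    obtain ⟨n'', h3, h4⟩ := hZ.forth _ _ _ h2 _ hr
    exact ⟨n'', h1.tail h3, h4⟩

theorem back' (hZ : IsZ Q M N Z) {h m n n'} (hz : Z h m n) (hr : ReflTransGen N.R n n') :
    ∃ m', ReflTransGen M.R m m' ∧ Z h m' n' := by
  induction hr with
  | refl => exact ⟨m, .refl, hz⟩
  | tail _ hr ih =>
    obtain ⟨n', h1, h2⟩ := ih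
    obtain ⟨n'', h3, h4⟩ := hZ.back _ _ _ h2 _ hr
    exact ⟨n'', h1.tail h3, h4⟩

theorem at_ (hZ : IsZ Q M N Z) {h c d w v} (hz : Z h c d) (hr : ReflTransGen M.R c w)
    (hm : (w, v) ∈ h) : Z h w v := by
  obtain ⟨u, _, hu⟩ := hZ.forth' hz hr
  have := (hZ.wvar _ _ _ hu _ _ hm).1 rfl
  rwa [this]

theorem extL (hZ : IsZ Q M N Z) {h c d w} (hz : Z h c d) (hm : (c, d) ∈ h)
    (h1 : ReflTransGen M.R c w) (h2 : ReflTransGen M.R w c) :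
    ∃ v, ReflTransGen N.R d v ∧ ReflTransGen N.R v d ∧ Z ((w, v) :: h) c d := by
  obtain ⟨v, hv, hzv⟩ := hZ.forth' hz h1
  obtain ⟨d', hd, hzd⟩ := hZ.forth' (hZ.bind _ _ _ hzv) h2
  have := (hZ.wvar _ _ _ hzd c d (List.mem_cons_of_mem _ hm)).1 rfl
  subst this
  exact ⟨v, hv, hd, hzd⟩

theorem extR (hZ : IsZ Q M N Z) {h c d v} (hz : Z h c d) (hm : (c, d) ∈ h)
    (h1 : ReflTransGen N.R d v) (h2 : ReflTransGen N.R v d) :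
    ∃ w, ReflTransGen M.R c w ∧ ReflTransGen M.R w c ∧ Z ((w, v) :: h) c d := by
  obtain ⟨w, hv, hzv⟩ := hZ.back' hz h1
  obtain ⟨d', hd, hzd⟩ := hZ.back' (hZ.bind _ _ _ hzv) h2
  have := (hZ.wvar _ _ _ hzd c d (List.mem_cons_of_mem _ hm)).2 rfl
  subst this
  exact ⟨w, hv, hd, hzd⟩

end IsZ

/-- What we need from the isomorphism of strongly connected components. -/
structure IsF {P : Type} (Q : List P) (M N : Kripke P Empty)
    (Z : List (M.W × N.W) → M.W → N.W → Prop) (c : M.W) (d : N.W)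
    (F : M.W → N.W → Prop) : Prop where
  base : F c d
  fn : ∀ w v v', F w v → F w v' → v = v'
  inj : ∀ w w' v, F w v → F w' v → w = w'
  prop : ∀ w v, F w v → ∀ p ∈ Q, M.V p w ↔ N.V p v
  inL : ∀ w v, F w v → ∀ w', M.R w w' → ReflTransGen M.R w' w →
    ∃ v', N.R v v' ∧ ReflTransGen N.R v' v ∧ F w' v'
  inR : ∀ w v, F w v → ∀ v', N.R v v' → ReflTransGen N.R v' v →
    ∃ w', M.R w w' ∧ ReflTransGen M.R w' w ∧ F w' v'
  outL : ∀ w v, F w v → ∀ w', M.R w w' → ¬ ReflTransGen M.R w' w →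
    ∃ v', N.R v v' ∧ ¬ ReflTransGen N.R v' v ∧ ∃ h, Z h w' v'
  outR : ∀ w v, F w v → ∀ v', N.R v v' → ¬ ReflTransGen N.R v' v →
    ∃ w', M.R w w' ∧ ¬ ReflTransGen M.R w' w ∧ ∃ h, Z h w' v'

theorem exists_F {P : Type} {Q : List P} {M N : Kripke P Empty}
    {Z : List (M.W × N.W) → M.W → N.W → Prop} (hZ : IsZ Q M N Z)
    (hM : Countable M.W) (hN : Countable N.W) (c : M.W) (d : N.W) (h0 : List (M.W × N.W))
    (hz0 : Z h0 c d) : ∃ F, IsF Q M N Z c d F := by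
  classical
  let SL : M.W → Prop := fun w => ReflTransGen M.R c w ∧ ReflTransGen M.R w c
  let SR : N.W → Prop := fun v => ReflTransGen N.R d v ∧ ReflTransGen N.R v d
  let St := {h : List (M.W × N.W) // Z h c d ∧ (c, d) ∈ h}
  let good : M.W ⊕ N.W → St → Prop := fun e s => match e with
    | .inl w => SL w → ∃ v, SR v ∧ (w, v) ∈ s.1
    | .inr v => SR v → ∃ w, SL w ∧ (w, v) ∈ s.1
  have step : ∀ (s : St) (e : M.W ⊕ N.W), ∃ s' : St, s.1 ⊆ s'.1 ∧ good e s' := by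
    rintro ⟨h, hz, hm⟩ (w | v)
    · by_cases hs : SL w
      · obtain ⟨v, h1, h2, h3⟩ := hZ.extL hz hm hs.1 hs.2
        exact ⟨⟨(w, v) :: h, h3, List.mem_cons_of_mem _ hm⟩, List.subset_cons_self _ _,
          fun _ => ⟨v, ⟨h1, h2⟩, List.mem_cons_self⟩⟩
      · exact ⟨⟨h, hz, hm⟩, fun _ h => h, fun h => absurd h hs⟩
    · by_cases hs : SR v
      · obtain ⟨w, h1, h2, h3⟩ := hZ.extR hz hm hs.1 hs.2
        exact ⟨⟨(w, v) :: h, h3, List.mem_cons_of_mem _ hm⟩, List.subset_cons_self _ _,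
          fun _ => ⟨w, ⟨h1, h2⟩, List.mem_cons_self⟩⟩
      · exact ⟨⟨h, hz, hm⟩, fun _ h => h, fun h => absurd h hs⟩
  choose nx hnx1 hnx2 using step
  have : Nonempty (M.W ⊕ N.W) := ⟨.inl c⟩
  obtain ⟨E, hE⟩ := exists_surjective_nat (M.W ⊕ N.W)
  let s0 : St := ⟨(c, d) :: h0, hZ.bind _ _ _ hz0, List.mem_cons_self⟩
  let sq : ℕ → St := fun i => Nat.rec s0 (fun i s => nx s (E i)) i
  have hsucc : ∀ i, sq (i + 1) = nx (sq i) (E i) := fun i => rfl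
  have hmono : ∀ i j, i ≤ j → (sq i).1 ⊆ (sq j).1 := by
    intro i j hij
    induction hij with
    | refl => exact fun _ h => h
    | step _ ih => exact fun x hx => hnx1 _ _ (ih hx)
  have hgood : ∀ e, ∃ i, good e (sq i) := by
    intro e
    obtain ⟨i, rfl⟩ := hE e
    exact ⟨i + 1, hnx2 _ _⟩
  let F : M.W → N.W → Prop := fun w v => SL w ∧ SR v ∧ ∃ i, (w, v) ∈ (sq i).1
  have totL : ∀ w, SL w → ∃ v, F w v := by
    intro w hw
    obtain ⟨i, hi⟩ := hgood (.inl w)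
    obtain ⟨v, hv, hm⟩ := hi hw
    exact ⟨v, hw, hv, i, hm⟩
  have totR : ∀ v, SR v → ∃ w, F w v := by
    intro v hv
    obtain ⟨i, hi⟩ := hgood (.inr v)
    obtain ⟨w, hw, hm⟩ := hi hv
    exact ⟨w, hw, hv, i, hm⟩
  have zz : ∀ w v w' v', F w v → F w' v' → ∃ h, Z h w v ∧ (w, v) ∈ h ∧ (w', v') ∈ h := by
    rintro w v w' v' ⟨hw, hv, i, hi⟩ ⟨hw', hv', j, hj⟩
    have h1 := hmono i (max i j) (le_max_left _ _) hi
    have h2 := hmono j (max i j) (le_max_right _ _) hj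
    exact ⟨_, hZ.at_ (sq (max i j)).2.1 hw.1 h1, h1, h2⟩
  refine ⟨F, ?_, ?_, ?_, ?_, ?_, ?_, ?_, ?_⟩
  · exact ⟨⟨.refl, .refl⟩, ⟨.refl, .refl⟩, 0, List.mem_cons_self⟩
  · intro w v v' h1 h2
    obtain ⟨h, hz, _, hm⟩ := zz _ _ _ _ h1 h2
    exact ((hZ.wvar _ _ _ hz _ _ hm).1 rfl).symm
  · intro w w' v h1 h2
    obtain ⟨h, hz, _, hm⟩ := zz _ _ _ _ h1 h2
    exact ((hZ.wvar _ _ _ hz _ _ hm).2 rfl).symm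
  · intro w v h1
    obtain ⟨h, hz, _⟩ := zz _ _ _ _ h1 h1
    exact hZ.prop _ _ _ hz
  · intro w v h1 w' hr hr'
    have hw' : SL w' := ⟨h1.1.1.tail hr, hr'.trans h1.1.2⟩
    obtain ⟨v', h2⟩ := totL w' hw'
    obtain ⟨h, hz, _, hm⟩ := zz _ _ _ _ h1 h2
    obtain ⟨v'', h3, h4⟩ := hZ.forth _ _ _ hz _ hr
    have := (hZ.wvar _ _ _ h4 _ _ hm).1 rfl
    subst this
    exact ⟨v', h3, h2.2.1.2.trans h1.2.1.1, h2⟩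
  · intro w v h1 v' hr hr'
    have hv' : SR v' := ⟨h1.2.1.1.tail hr, hr'.trans h1.2.1.2⟩
    obtain ⟨w', h2⟩ := totR v' hv'
    obtain ⟨h, hz, _, hm⟩ := zz _ _ _ _ h1 h2
    obtain ⟨w'', h3, h4⟩ := hZ.back _ _ _ hz _ hr
    have := (hZ.wvar _ _ _ h4 _ _ hm).2 rfl
    subst this
    exact ⟨w', h3, h2.1.2.trans h1.1.1, h2⟩
  · intro w v h1 w' hr hr'
    obtain ⟨h, hz, hm, _⟩ := zz _ _ _ _ h1 h1
    obtain ⟨v', h3, h4⟩ := hZ.forth _ _ _ hz _ hr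
    refine ⟨v', h3, ?_, h, h4⟩
    intro hb
    obtain ⟨u, hu, hzu⟩ := hZ.back' h4 hb
    have := (hZ.wvar _ _ _ hzu _ _ hm).2 rfl
    subst this
    exact hr' hu
  · intro w v h1 v' hr hr'
    obtain ⟨h, hz, hm, _⟩ := zz _ _ _ _ h1 h1
    obtain ⟨w', h3, h4⟩ := hZ.back _ _ _ hz _ hr
    refine ⟨w', h3, ?_, h, h4⟩
    intro hb
    obtain ⟨u, hu, hzu⟩ := hZ.forth' h4 hb
    have := (hZ.wvar _ _ _ hzu _ _ hm).1 rfl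
    subst this
    exact hr' hu

/-! ### Unravelling along strongly connected components -/

inductive UR {W : Type} (R : W → W → Prop) : List (W × W) × W → List (W × W) × W → Prop
  | stay (p w w') : R w w' → ReflTransGen R w' w → UR R (p, w) (p, w')
  | leave (p w w') : R w w' → ¬ ReflTransGen R w' w → UR R (p, w) ((w, w') :: p, w')

abbrev unr {P : Type} (M : Kripke P Empty) : Kripke P Empty where
  W := List (M.W × M.W) × M.W
  R := UR M.R
  V := fun p x => M.V p x.2
  nom := fun s => s.elim

theorem ur_aux {W : Type} {R : W → W → Prop} {x y : List (W × W) × W}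
    (h : ReflTransGen (UR R) x y) :
    x.1 <:+ y.1 ∧ ReflTransGen R x.2 y.2 ∧ (y.1 = x.1 ∨ ¬ ReflTransGen R y.2 x.2) := by
  induction h with
  | refl => exact ⟨List.suffix_refl _, .refl, Or.inl rfl⟩
  | tail _ hr ih =>
    obtain ⟨h1, h2, h3⟩ := ih
    cases hr with
    | stay p w w' hr hb =>
      refine ⟨h1, h2.tail hr, ?_⟩
      rcases h3 with h3 | h3
      · exact Or.inl h3
      · exact Or.inr fun hc => h3 (ReflTransGen.head hr hc)
    | leave p w w' hr hb =>
      exact ⟨h1.trans (List.suffix_cons _ _), h2.tail hr, Or.inr fun hc => hb (hc.trans h2)⟩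

theorem unr_bisim {P : Type} (M : Kripke P Empty) :
    IsBisim (unr M) M (fun x w => x.2 = w) ∧ QuasiInjective (unr M) M (fun x w => x.2 = w) := by
  refine ⟨?_, ?_, ?_⟩
  · rintro ⟨p, w⟩ _ rfl
    refine ⟨fun _ => Iff.rfl, ?_, ?_⟩
    · intro x hx
      cases hx with
      | stay p w w' hr hb => exact ⟨w', hr, rfl⟩
      | leave p w w' hr hb => exact ⟨w', hr, rfl⟩
    · intro w' hr
      by_cases hb : ReflTransGen M.R w' w
      · exact ⟨(p, w'), .stay _ _ _ hr hb, rfl⟩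
      · exact ⟨((w, w') :: p, w'), .leave _ _ _ hr hb, rfl⟩
  · intro m n n' h1 h2 hne
    exact absurd (h1.symm.trans h2) hne
  · have key : ∀ x y : (unr M).W, x.2 = y.2 → ReflTransGen (UR M.R) x y → x = y := by
      rintro ⟨p, w⟩ ⟨q, v⟩ h hr
      obtain ⟨_, _, h3⟩ := ur_aux hr
      simp only at h h3
      subst h
      rcases h3 with h3 | h3
      · rw [h3]
      · exact absurd .refl h3
    intro x y n h1 h2 hne
    exact ⟨fun hr => hne (key x y (h1.trans h2.symm) hr),
      fun hr => hne (key y x (h2.trans h1.symm) hr).symm⟩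

def entry {W : Type} (m : W) : List (W × W) → W
  | [] => m
  | x :: _ => x.2

section Match
variable {A B : Type} (Y : A → B → Prop) (F : A → B → A → B → Prop) (m : A) (n : B)

inductive Matched : List (A × A) → List (B × B) → Prop
  | nil : Matched [] []
  | cons (a c p b d q) : Matched p q → Y c d → Matched ((a, c) :: p) ((b, d) :: q)

theorem Matched.len {Y : A → B → Prop} {p q} (h : Matched Y p q) : p.length = q.length := by
  induction h with
  | nil => rfl
  | cons a c p b d q _ _ ih => simp [ih]

theorem Matched.entry {Y : A → B → Prop} {m n} (h0 : Y m n) {p q} (h : Matched Y p q) :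
    Y (entry m p) (entry n q) := by
  cases h with
  | nil => exact h0
  | cons a c p b d q _ h => exact h
end Match

theorem main_bisim {P : Type} {Q : List P} {M N : Kripke P Empty}
    {Z : List (M.W × N.W) → M.W → N.W → Prop} (hZ : IsZ Q M N Z)
    (hV : ∀ p ∉ Q, ∀ m n, M.V p m ↔ N.V p n)
    (hM : Countable M.W) (hN : Countable N.W) (m : M.W) (n : N.W) (h0 : List (M.W × N.W))
    (hz0 : Z h0 m n) :
    ∃ B : (unr M).W → (unr N).W → Prop, IsBisim (unr M) (unr N) B ∧
      QuasiInjective (unr M) (unr N) B ∧ B ([], m) ([], n) := by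
  classical
  have hF : ∀ c d, ∃ F, (∃ h, Z h c d) → IsF Q M N Z c d F := by
    intro c d
    by_cases h : ∃ h, Z h c d
    · obtain ⟨h, hz⟩ := h
      obtain ⟨F, hF⟩ := exists_F hZ hM hN c d h hz
      exact ⟨F, fun _ => hF⟩
    · exact ⟨fun _ _ => True, fun h' => absurd h' h⟩
  choose F hF using hF
  let Y : M.W → N.W → Prop := fun c d => ∃ h, Z h c d
  have hY0 : Y m n := ⟨h0, hz0⟩
  refine ⟨fun x y => Matched Y x.1 y.1 ∧ F (entry m x.1) (entry n y.1) x.2 y.2, ?_, ?_, ?_⟩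
  · rintro ⟨p, w⟩ ⟨q, v⟩ ⟨hm, hf⟩
    simp only at hm hf
    have hFF := hF _ _ (hm.entry hY0)
    refine ⟨?_, ?_, ?_⟩
    · intro r
      by_cases hr : r ∈ Q
      · exact hFF.prop _ _ hf r hr
      · exact hV r hr _ _
    · intro x hx
      cases hx with
      | stay p w w' hr hb =>
        obtain ⟨v', h1, h2, h3⟩ := hFF.inL _ _ hf _ hr hb
        exact ⟨(q, v'), .stay _ _ _ h1 h2, hm, h3⟩
      | leave p w w' hr hb =>
        obtain ⟨v', h1, h2, h3⟩ := hFF.outL _ _ hf _ hr hb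
        exact ⟨((v, v') :: q, v'), .leave _ _ _ h1 h2, .cons _ _ _ _ _ _ hm h3,
          (hF _ _ h3).base⟩
    · intro x hx
      cases hx with
      | stay p v v' hr hb =>
        obtain ⟨w', h1, h2, h3⟩ := hFF.inR _ _ hf _ hr hb
        exact ⟨(_, w'), .stay _ _ _ h1 h2, hm, h3⟩
      | leave q v v' hr hb =>
        obtain ⟨w', h1, h2, h3⟩ := hFF.outR _ _ hf _ hr hb
        exact ⟨((w, w') :: p, w'), .leave _ _ _ h1 h2, .cons _ _ _ _ _ _ hm h3,
          (hF _ _ h3).base⟩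
  · constructor
    · have key : ∀ (x : (unr M).W) (y y' : (unr N).W),
          (Matched Y x.1 y.1 ∧ F (entry m x.1) (entry n y.1) x.2 y.2) →
          (Matched Y x.1 y'.1 ∧ F (entry m x.1) (entry n y'.1) x.2 y'.2) →
          ReflTransGen (UR N.R) y y' → y = y' := by
        rintro ⟨p, w⟩ ⟨q, v⟩ ⟨q', v'⟩ ⟨h1, h2⟩ ⟨h3, h4⟩ hr
        have hs : q = q' := (ur_aux hr).1.eq_of_length (h1.len.symm.trans h3.len)
        subst hs
        have := (hF _ _ (h1.entry hY0)).fn _ _ _ h2 h4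
        simp only at this
        rw [this]
      intro x y y' h1 h2 hne
      exact ⟨fun hr => hne (key x y y' h1 h2 hr), fun hr => hne (key x y' y h2 h1 hr).symm⟩
    · have key : ∀ (x x' : (unr M).W) (y : (unr N).W),
          (Matched Y x.1 y.1 ∧ F (entry m x.1) (entry n y.1) x.2 y.2) →
          (Matched Y x'.1 y.1 ∧ F (entry m x'.1) (entry n y.1) x'.2 y.2) →
          ReflTransGen (UR M.R) x x' → x = x' := by
        rintro ⟨p, w⟩ ⟨p', w'⟩ ⟨q, v⟩ ⟨h1, h2⟩ ⟨h3, h4⟩ hr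
        have hs : p = p' := (ur_aux hr).1.eq_of_length (h1.len.trans h3.len.symm)
        subst hs
        have := (hF _ _ (h1.entry hY0)).inj _ _ _ h2 h4
        simp only at this
        rw [this]
      intro x x' y h1 h2 hne
      exact ⟨fun hr => hne (key x x' y h1 h2 hr), fun hr => hne (key x' x y h2 h1 hr).symm⟩
  · exact ⟨.nil, (hF _ _ hY0).base⟩

def Inv {P : Type} (φ : FOForm P Empty FVar) : Prop :=
  ∀ (M N : Kripke P Empty) (B : M.W → N.W → Prop),
       IsBisim M N B → QuasiInjective M N B →
       ∀ (m : M.W) (n : N.W), B m n → (FOSatAt M m φ ↔ FOSatAt N n φ)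

/-- countable case -/
theorem countable_case {P : Type} (φ : FOForm P Empty FVar) (hinv : Inv φ)
    {M N : Kripke P Empty}
    {Z : List (M.W × N.W) → M.W → N.W → Prop} (hZ : IsZ (props φ) M N Z)
    (hM : Countable M.W) (hN : Countable N.W) (m : M.W) (n : N.W) (h0 : List (M.W × N.W))
    (hz0 : Z h0 m n) : FOSatAt M m φ ↔ FOSatAt N n φ := by
  have e : ∀ (K : Kripke P Empty) (k : K.W), FOSatAt (restr (props φ) K) k φ ↔ FOSatAt K k φ := by
    intro K k
    exact forall_congr' fun g => imp_congr_right fun _ => fosat_restr _ K φ g fun _ h => h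
  have hZ' : IsZ (props φ) (restr (props φ) M) (restr (props φ) N) Z :=
    ⟨fun h m n hz p hp => and_congr_right fun _ => hZ.prop h m n hz p hp,
      hZ.wvar, hZ.forth, hZ.back, hZ.bind⟩
  obtain ⟨B, h1, h2, h3⟩ := main_bisim hZ'
    (fun p hp m n => iff_of_false (fun h => hp h.1) (fun h => hp h.1)) hM hN m n h0 hz0
  rw [← e M, ← e N]
  have a1 := hinv _ _ _ (unr_bisim (restr (props φ) M)).1 (unr_bisim (restr (props φ) M)).2
    ([], m) m rfl
  have a2 := hinv _ _ _ (unr_bisim (restr (props φ) N)).1 (unr_bisim (restr (props φ) N)).2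
    ([], n) n rfl
  rw [← a1, ← a2]
  exact hinv _ _ B h1 h2 _ _ h3

/-! ### Löwenheim–Skolem -/

def Closed {W : Type} (D : Set (List W → W → Prop)) (S : Set W) : Prop :=
  ∀ d ∈ D, ∀ l : List W, (∀ x ∈ l, x ∈ S) → (∃ w, d l w) → ∃ w ∈ S, d l w

theorem exists_closed {W : Type} (D : Set (List W → W → Prop)) (hD : D.Countable) (x0 : W) :
    ∃ S : Set W, S.Countable ∧ x0 ∈ S ∧ Closed D S := by
  classical
  let op : (List W → W → Prop) → List W → W := fun d l =>
    if h : ∃ w, d l w then h.choose else x0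
  let nx : Set W → Set W := fun S => S ∪ ⋃ d ∈ D, op d '' {l | ∀ x ∈ l, x ∈ S}
  let sq : ℕ → Set W := fun i => Nat.rec {x0} (fun _ S => nx S) i
  have hc : ∀ i, (sq i).Countable := by
    intro i
    induction i with
    | zero => exact Set.countable_singleton x0
    | succ i ih =>
      refine ih.union (hD.biUnion fun d _ => Set.Countable.image ?_ _)
      rw [← Set.range_list_map_coe]
      have := ih.to_subtype
      exact Set.countable_range _
  have hmono : ∀ i j, i ≤ j → sq i ⊆ sq j := by
    intro i j hij
    induction hij with
    | refl => exact fun _ h => h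
    | step _ ih => exact fun x hx => Or.inl (ih hx)
  refine ⟨⋃ i, sq i, Set.countable_iUnion hc, Set.mem_iUnion.2 ⟨0, rfl⟩, ?_⟩
  intro d hd l hl hw
  have : ∃ i, ∀ x ∈ l, x ∈ sq i := by
    clear hw
    induction l with
    | nil => exact ⟨0, by simp⟩
    | cons a l ih =>
      obtain ⟨i, hi⟩ := ih (fun x hx => hl x (List.mem_cons_of_mem _ hx))
      obtain ⟨j, hj⟩ := Set.mem_iUnion.1 (hl a List.mem_cons_self)
      refine ⟨max i j, ?_⟩
      intro x hx
      rcases List.mem_cons.1 hx with rfl | hx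
      · exact hmono _ _ (le_max_right _ _) hj
      · exact hmono _ _ (le_max_left _ _) (hi x hx)
  obtain ⟨i, hi⟩ := this
  refine ⟨op d l, Set.mem_iUnion.2 ⟨i + 1, Or.inr ?_⟩, ?_⟩
  · exact Set.mem_biUnion hd ⟨l, hi, rfl⟩
  · simp only [op, dif_pos hw]
    exact hw.choose_spec

abbrev sub {P : Type} (M : Kripke P Empty) (S : Set M.W) : Kripke P Empty where
  W := S
  R := fun x y => M.R x y
  V := fun p x => M.V p x
  nom := fun s => s.elim

theorem val_sub {P : Type} (M : Kripke P Empty) (S : Set M.W) (g : FVar → S)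
    (t : FOTerm Empty FVar) : ((t.val (sub M S) g : S) : M.W) = t.val M (fun v => (g v : M.W)) := by
  cases t with
  | var v => rfl
  | nom s => exact s.elim

theorem upd_sub {W : Type} (S : Set W) (g : FVar → S) (v : FVar) (w : S) :
    (fun u => (Function.update g v w u : W)) = Function.update (fun u => (g u : W)) v w := by
  funext u
  by_cases h : u = v
  · subst h; simp
  · simp [Function.update_of_ne h]

theorem fo_demands {P : Type} (M : Kripke P Empty) (x0 : M.W) (φ : FOForm P Empty FVar) :
    ∃ D : Set (List M.W → M.W → Prop), D.Countable ∧ ∀ S, Closed D S → ∀ g : FVar → S,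
      (FOSat (sub M S) g φ ↔ FOSat M (fun v => (g v : M.W)) φ) := by
  induction φ with
  | bot => exact ⟨∅, Set.countable_empty, fun S _ g => Iff.rfl⟩
  | pred p t =>
    refine ⟨∅, Set.countable_empty, fun S _ g => ?_⟩
    simp only [FOSat, val_sub]
  | rel t u =>
    refine ⟨∅, Set.countable_empty, fun S _ g => ?_⟩
    simp only [FOSat, val_sub]
  | eq t u =>
    refine ⟨∅, Set.countable_empty, fun S _ g => ?_⟩
    simp only [FOSat]
    rw [← val_sub, ← val_sub, Subtype.coe_inj]
  | neg φ ih =>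
    obtain ⟨D, hD, h⟩ := ih
    exact ⟨D, hD, fun S hS g => not_congr (h S hS g)⟩
  | or φ ψ ih1 ih2 =>
    obtain ⟨D1, hD1, h1⟩ := ih1
    obtain ⟨D2, hD2, h2⟩ := ih2
    exact ⟨D1 ∪ D2, hD1.union hD2, fun S hS g => or_congr
      (h1 S (fun d hd => hS d (Or.inl hd)) g) (h2 S (fun d hd => hS d (Or.inr hd)) g)⟩
  | ex v χ ih =>
    obtain ⟨D, hD, h⟩ := ih
    let asg : List M.W → FVar → M.W := fun l u => l.getD (Encodable.encode u) x0
    let d : List M.W → M.W → Prop := fun l w => FOSat M (Function.update (asg l) v w) χ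
    refine ⟨insert d D, hD.insert d, fun S hS g => ?_⟩
    have hS' : Closed D S := fun d hd => hS d (Or.inr hd)
    obtain ⟨K, hK⟩ : ∃ K, ∀ u ∈ χ.free, Encodable.encode u < K := by
      obtain ⟨K, hK⟩ := ((free_finite χ).image Encodable.encode).bddAbove
      exact ⟨K + 1, fun u hu => Nat.lt_succ_of_le (hK ⟨u, hu, rfl⟩)⟩
    let l : List M.W := (List.range K).map fun i =>
      ((Encodable.decode i : Option FVar).elim (g v : M.W) fun u => (g u : M.W))
    have hl : ∀ x ∈ l, x ∈ S := by
      intro x hx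
      obtain ⟨i, _, rfl⟩ := List.mem_map.1 hx
      cases (Encodable.decode i : Option FVar) with
      | none => exact (g v).2
      | some u => exact (g u).2
    have hasg : ∀ u ∈ χ.free, asg l u = g u := by
      intro u hu
      have := hK u hu
      have e : (Encodable.decode (Encodable.encode u) : Option FVar) = some u :=
        Encodable.encodek u
      simp only [asg, l, List.getD_eq_getElem?_getD, List.getElem?_map,
        List.getElem?_range this, Option.map_some, Option.getD_some, e, Option.elim_some]
    have hd : ∀ w, d l w ↔ FOSat M (Function.update (fun u => (g u : M.W)) v w) χ := by
      intro w
      apply fosat_congr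
      intro u hu
      by_cases huv : u = v
      · subst huv; simp
      · simp only [Function.update_of_ne huv]
        exact hasg u hu
    simp only [FOSat]
    constructor
    · rintro ⟨w, hw⟩
      refine ⟨w, ?_⟩
      rw [← upd_sub]
      exact (h S hS' _).1 hw
    · rintro ⟨w, hw⟩
      obtain ⟨w', hw', hd'⟩ := hS d (Or.inl rfl) l hl ⟨w, (hd w).2 hw⟩
      refine ⟨⟨w', hw'⟩, (h S hS' _).2 ?_⟩
      rw [upd_sub]
      exact (hd w').1 hd'

theorem satAt_iff {P : Type} (φ : FOForm P Empty FVar) (hfree : φ.free ⊆ {Sum.inr false})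
    (M : Kripke P Empty) (m : M.W) (g : FVar → M.W) (hg : g (Sum.inr false) = m) :
    FOSatAt M m φ ↔ FOSat M g φ := by
  refine ⟨fun h => h g hg, fun h g' hg' => (fosat_congr M φ g' g ?_).2 h⟩
  intro v hv
  have := hfree hv
  simp only [Set.mem_singleton_iff] at this
  subst this
  rw [hg, hg']

theorem general_case {P : Type} (φ : FOForm P Empty FVar) (hfree : φ.free ⊆ {Sum.inr false})
    (hinv : Inv φ) {M N : Kripke P Empty}
    {Z : List (M.W × N.W) → M.W → N.W → Prop} (hZ : IsZ (props φ) M N Z)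
    (m : M.W) (n : N.W) (hz0 : Z [] m n) : FOSatAt M m φ ↔ FOSatAt N n φ := by
  obtain ⟨D1, hD1, h1⟩ := fo_demands M m φ
  obtain ⟨D2, hD2, h2⟩ := fo_demands N n φ
  let W := M.W × N.W
  let e1 : (List M.W → M.W → Prop) → (List W → W → Prop) := fun d l w => d (l.map Prod.fst) w.1
  let e2 : (List N.W → N.W → Prop) → (List W → W → Prop) := fun d l w => d (l.map Prod.snd) w.2
  let dp : List W → W → Prop := fun l w => ∃ x y : W, l = [x, y] ∧ w = (x.1, y.2)
  let df : List W → W → Prop := fun l w => ∃ x h, l = x :: h ∧ N.R x.2 w.2 ∧ Z h x.1 w.2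
  let db : List W → W → Prop := fun l w => ∃ x h, l = x :: h ∧ M.R x.1 w.1 ∧ Z h w.1 x.2
  obtain ⟨U, hU, hU0, hUc⟩ := exists_closed ((e1 '' D1 ∪ e2 '' D2) ∪ {dp, df, db})
    (((hD1.image _).union (hD2.image _)).union (Set.Finite.countable (by simp))) (m, n)
  have hpair : ∀ x ∈ U, ∀ y ∈ U, (x.1, y.2) ∈ U := by
    intro x hx y hy
    obtain ⟨w, hw, x', y', he, rfl⟩ := hUc dp (by simp) [x, y] (by simp [hx, hy])
      ⟨_, x, y, rfl, rfl⟩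
    simp only [List.cons.injEq, and_true] at he
    rw [he.1, he.2]; exact hw
  let S : Set M.W := Prod.fst '' U
  let T : Set N.W := Prod.snd '' U
  have hST : ∀ a ∈ S, ∀ b ∈ T, (a, b) ∈ U := by
    rintro _ ⟨x, hx, rfl⟩ _ ⟨y, hy, rfl⟩
    exact hpair x hx y hy
  have hmS : m ∈ S := ⟨_, hU0, rfl⟩
  have hnT : n ∈ T := ⟨_, hU0, rfl⟩
  have cS : Closed D1 S := by
    rintro d hd l hl ⟨w, hw⟩
    obtain ⟨w', hw', hd'⟩ := hUc (e1 d) (Or.inl (Or.inl ⟨d, hd, rfl⟩)) (l.map fun a => (a, n))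
      (by
        intro x hx
        obtain ⟨a, ha, rfl⟩ := List.mem_map.1 hx
        exact hST a (hl a ha) n hnT)
      ⟨(w, n), by simpa [e1, Function.comp_def] using hw⟩
    exact ⟨w'.1, ⟨w', hw', rfl⟩, by simpa [e1, Function.comp_def] using hd'⟩
  have cT : Closed D2 T := by
    rintro d hd l hl ⟨w, hw⟩
    obtain ⟨w', hw', hd'⟩ := hUc (e2 d) (Or.inl (Or.inr ⟨d, hd, rfl⟩)) (l.map fun a => (m, a))
      (by
        intro x hx
        obtain ⟨a, ha, rfl⟩ := List.mem_map.1 hx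
        exact hST m hmS a (hl a ha))
      ⟨(m, w), by simpa [e2, Function.comp_def] using hw⟩
    exact ⟨w'.2, ⟨w', hw', rfl⟩, by simpa [e2, Function.comp_def] using hd'⟩
  let vv : S × T → W := fun x => (x.1, x.2)
  have hvv : ∀ h : List (S × T), ∀ x ∈ h.map vv, x ∈ U := by
    intro h x hx
    obtain ⟨y, _, rfl⟩ := List.mem_map.1 hx
    exact hST _ y.1.2 _ y.2.2
  have hZ' : IsZ (props φ) (sub M S) (sub N T) (fun h a b => Z (h.map vv) a b) := by
    refine ⟨?_, ?_, ?_, ?_, ?_⟩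
    · intro h a b hz; exact hZ.prop _ _ _ hz
    · intro h a b hz c d hm
      have := hZ.wvar _ _ _ hz c d (List.mem_map.2 ⟨(c, d), hm, rfl⟩)
      rwa [Subtype.coe_inj, Subtype.coe_inj] at this
    · intro h a b hz a' hr
      obtain ⟨b', hr', hz'⟩ := hZ.forth _ _ _ hz _ hr
      obtain ⟨w, hw, x, k, he, h3, h4⟩ := hUc df (by simp) ((a'.1, b.1) :: h.map vv)
        (by
          intro x hx
          rcases List.mem_cons.1 hx with rfl | hx
          · exact hST _ a'.2 _ b.2
          · exact hvv h x hx)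
        ⟨(a'.1, b'), _, _, rfl, hr', hz'⟩
      obtain ⟨rfl, rfl⟩ := List.cons.inj he
      exact ⟨⟨w.2, ⟨w, hw, rfl⟩⟩, h3, h4⟩
    · intro h a b hz b' hr
      obtain ⟨a', hr', hz'⟩ := hZ.back _ _ _ hz _ hr
      obtain ⟨w, hw, x, k, he, h3, h4⟩ := hUc db (by simp) ((a.1, b'.1) :: h.map vv)
        (by
          intro x hx
          rcases List.mem_cons.1 hx with rfl | hx
          · exact hST _ a.2 _ b'.2
          · exact hvv h x hx)
        ⟨(a', b'.1), _, _, rfl, hr', hz'⟩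
      obtain ⟨rfl, rfl⟩ := List.cons.inj he
      exact ⟨⟨w.1, ⟨w, hw, rfl⟩⟩, h3, h4⟩
    · intro h a b hz
      exact hZ.bind _ _ _ hz
  have := countable_case φ hinv hZ' (hU.image _).to_subtype (hU.image _).to_subtype
    ⟨m, hmS⟩ ⟨n, hnT⟩ [] hz0
  rw [satAt_iff φ hfree (sub M S) _ (fun _ => ⟨m, hmS⟩) rfl,
    satAt_iff φ hfree (sub N T) _ (fun _ => ⟨n, hnT⟩) rfl, h1 S cS, h2 T cT] at this
  rw [satAt_iff φ hfree M m (fun _ => m) rfl, satAt_iff φ hfree N n (fun _ => n) rfl]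
  exact this

/-! ### Ultraproducts -/

section Ultra
variable {P : Type} (U : Ultrafilter ℕ)

def upS (M : ℕ → Type) : Setoid (∀ l, M l) where
  r a b := ∀ᶠ l in (U : Filter ℕ), a l = b l
  iseqv := ⟨fun _ => Eventually.of_forall fun _ => rfl, fun h => h.mono fun _ h => h.symm,
    fun h1 h2 => (h1.and h2).mono fun _ h => h.1.trans h.2⟩

abbrev UPW (M : ℕ → Type) : Type := Quotient (upS U M)

theorem out_mk (M : ℕ → Type) (f : ∀ l, M l) :
    ∀ᶠ l in (U : Filter ℕ), (Quotient.mk (upS U M) f).out l = f l :=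
  Quotient.exact (s := upS U M) (Quotient.out_eq (Quotient.mk (upS U M) f))

theorem eq_iff_out {M : ℕ → Type} (x y : UPW U M) :
    x = y ↔ ∀ᶠ l in (U : Filter ℕ), x.out l = y.out l := by
  constructor
  · rintro rfl; exact Eventually.of_forall fun _ => rfl
  · intro h
    rw [← Quotient.out_eq x, ← Quotient.out_eq y]
    exact Quotient.sound (s := upS U M) h

theorem exists_out {M : ℕ → Type} (x0 : UPW U M) (q : ∀ l, M l → Prop)
    (h : ∀ᶠ l in (U : Filter ℕ), ∃ w, q l w) :
    ∃ x : UPW U M, ∀ᶠ l in (U : Filter ℕ), q l (x.out l) := by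
  classical
  refine ⟨Quotient.mk (upS U M) fun l => if h : ∃ w, q l w then h.choose else x0.out l, ?_⟩
  filter_upwards [h, out_mk U M fun l => if h : ∃ w, q l w then h.choose else x0.out l]
    with l h1 h2
  rw [h2, dif_pos h1]
  exact h1.choose_spec

abbrev up (M : ℕ → Kripke P Empty) : Kripke P Empty where
  W := UPW U fun l => (M l).W
  R := fun x y => ∀ᶠ l in (U : Filter ℕ), (M l).R (x.out l) (y.out l)
  V := fun p x => ∀ᶠ l in (U : Filter ℕ), (M l).V p (x.out l)
  nom := fun s => s.elim

theorem val_up (M : ℕ → Kripke P Empty) (g : FVar → (up U M).W) (t : FOTerm Empty FVar)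
    (l : ℕ) : Quotient.out (t.val (up U M) g : UPW U fun l => (M l).W) l
      = t.val (M l) (fun v => (g v).out l) := by
  cases t with
  | var v => rfl
  | nom s => exact s.elim

theorem los (M : ℕ → Kripke P Empty) (φ : FOForm P Empty FVar) :
    ∀ g : FVar → (up U M).W, FOSat (up U M) g φ ↔
      ∀ᶠ l in (U : Filter ℕ), FOSat (M l) (fun v => (g v).out l) φ := by
  induction φ with
  | bot => intro g; simp [FOSat, U.neBot.ne]
  | pred p t => intro g; simp only [FOSat, val_up]
  | rel t u => intro g; simp only [FOSat, val_up]
  | eq t u => intro g; simp only [FOSat]; rw [eq_iff_out]; simp only [val_up]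
  | neg φ ih => intro g; simp only [FOSat]; rw [ih, Ultrafilter.eventually_not]
  | or φ ψ ih1 ih2 => intro g; simp only [FOSat]; rw [ih1, ih2, Ultrafilter.eventually_or]
  | ex v φ ih =>
    intro g
    simp only [FOSat]
    have hu : ∀ (w : (up U M).W) l, (fun u => (Function.update g v w u).out l)
        = Function.update (fun u => (g u).out l) v (w.out l) := by
      intro w l
      funext u
      by_cases h : u = v
      · subst h; simp
      · simp [Function.update_of_ne h]
    constructor
    · rintro ⟨w, hw⟩
      filter_upwards [(ih _).1 hw] with l hl
      refine ⟨w.out l, ?_⟩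
      rwa [hu] at hl
    · intro h
      obtain ⟨w, hw⟩ := exists_out U (g v) _ h
      refine ⟨w, (ih _).2 ?_⟩
      filter_upwards [hw] with l hl
      rw [hu]
      exact hl

theorem up_Z (hU : (U : Filter ℕ) ≤ atTop) (Q : List P) (M N : ℕ → Kripke P Empty) :
    IsZ Q (up U M) (up U N) (fun h m n => ∃ j, ∀ᶠ l in (U : Filter ℕ),
      Zapp Q (M l) (N l) (l - j) (h.map fun x => (x.1.out l, x.2.out l)) (m.out l) (n.out l)) := by
  have hstep : ∀ j, ∀ᶠ l in (U : Filter ℕ), l - j = (l - (j + 1)) + 1 := by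
    intro j
    filter_upwards [hU (eventually_gt_atTop j)] with l hl
    have : j < l := hl
    omega
  refine ⟨?_, ?_, ?_, ?_, ?_⟩
  · rintro h m n ⟨j, hz⟩ p hp
    apply Filter.eventually_congr
    filter_upwards [hz] with l hl
    exact hl.base.1 p hp
  · rintro h m n ⟨j, hz⟩ a b hab
    rw [eq_iff_out, eq_iff_out]
    apply Filter.eventually_congr
    filter_upwards [hz] with l hl
    exact hl.base.2 (a.out l, b.out l) (List.mem_map.2 ⟨(a, b), hab, rfl⟩)
  · rintro h m n ⟨j, hz⟩ m' hr
    obtain ⟨n', hn'⟩ := exists_out U n (fun l w => (N l).R (n.out l) w ∧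
      Zapp Q (M l) (N l) (l - (j + 1)) (h.map fun x => (x.1.out l, x.2.out l)) (m'.out l) w) (by
        filter_upwards [hz, hr, hstep j] with l h1 h2 h3
        rw [h3] at h1
        exact h1.2.1 _ h2)
    exact ⟨n', hn'.mono fun _ h => h.1, j + 1, hn'.mono fun _ h => h.2⟩
  · rintro h m n ⟨j, hz⟩ n' hr
    obtain ⟨m', hm'⟩ := exists_out U m (fun l w => (M l).R (m.out l) w ∧
      Zapp Q (M l) (N l) (l - (j + 1)) (h.map fun x => (x.1.out l, x.2.out l)) w (n'.out l)) (by
        filter_upwards [hz, hr, hstep j] with l h1 h2 h3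
        rw [h3] at h1
        exact h1.2.2.1 _ h2)
    exact ⟨m', hm'.mono fun _ h => h.1, j + 1, hm'.mono fun _ h => h.2⟩
  · rintro h m n ⟨j, hz⟩
    refine ⟨j + 1, ?_⟩
    filter_upwards [hz, hstep j] with l h1 h3
    rw [h3] at h1
    exact h1.2.2.2

end Ultra

/-- disjunction -/
def disj {P : Type} : List (HForm P Empty) → HForm P Empty
  | [] => .bot
  | t :: l => .or t (disj l)

theorem hsat_disj {P : Type} (M : Kripke P Empty) (ν : ℕ → M.W) (m : M.W)
    (L : List (HForm P Empty)) : HSat M ν m (disj L) ↔ ∃ t ∈ L, HSat M ν m t := by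
  induction L with
  | nil => simp [disj, HSat]
  | cons t L ih => simp [disj, HSat, ih]

theorem good_disj {P : Type} (k : ℕ) (L : List (HForm P Empty)) (h : ∀ t ∈ L, Good k t) :
    Good k (disj L) := by
  induction L with
  | nil => exact ⟨trivial, by simp [disj, HForm.free]⟩
  | cons t L ih =>
    have h1 := ih fun t ht => h t (List.mem_cons_of_mem _ ht)
    have h2 := h t List.mem_cons_self
    exact ⟨⟨h2.1, h1.1⟩, Set.union_subset h2.2 h1.2⟩

theorem hard {P : Type} (φ : FOForm P Empty FVar) (hfree : φ.free ⊆ {Sum.inr false})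
    (hinv : Inv φ) : ∃ ψ : HForm P Empty, ψ.inFragment {Feature.bind} ∧ ψ.free = ∅ ∧
       ∀ (M : Kripke P Empty) (g : FVar → M.W), FOSat M g φ ↔ FOSat M g (stdTr false ψ) := by
  classical
  by_contra hcon
  have hex : ∀ l : ℕ, ∃ (M N : Kripke P Empty) (m : M.W) (n : N.W),
      Zapp (props φ) M N l [] m n ∧ FOSatAt M m φ ∧ ¬ FOSatAt N n φ := by
    intro l
    let L := (types (Gam (props φ) l 0)).filter fun t => decide (∃ (M : Kripke P Empty)
      (g : FVar → M.W), FOSat M g φ ∧ HSat M (fun i => g (.inl i)) (g (.inr false)) t)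
    have hgood : Good 0 (disj L) := good_disj 0 L fun t ht =>
      good_types 0 _ (good_Gam _ l 0) t (List.mem_filter.1 ht).1
    by_contra hno
    apply hcon
    refine ⟨disj L, hgood.1, ?_, ?_⟩
    · apply Set.eq_empty_of_forall_notMem
      intro x hx
      exact Nat.not_lt_zero x (hgood.2 hx)
    · intro N g
      rw [hsat_std, hsat_disj]
      constructor
      · intro hs
        obtain ⟨t, ht, hst⟩ := types_exists N (fun i => g (.inl i)) (g (.inr false))
          (Gam (props φ) l 0)
        exact ⟨t, List.mem_filter.2 ⟨ht, decide_eq_true ⟨N, g, hs, hst⟩⟩, hst⟩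
      · rintro ⟨t, ht, hst⟩
        obtain ⟨ht, hd⟩ := List.mem_filter.1 ht
        obtain ⟨M, g', hs', hst'⟩ := of_decide_eq_true hd
        by_contra hns
        apply hno
        refine ⟨M, N, g' (.inr false), g (.inr false), ?_,
          (satAt_iff φ hfree M _ g' rfl).2 hs', fun h => hns ((satAt_iff φ hfree N _ g rfl).1 h)⟩
        exact agree_Zapp _ M N l [] _ _ _ _ (by simp) (types_agree M N _ _ _ _ _ t ht hst' hst)
  choose M N m n hz hm hn using hex
  let U : Ultrafilter ℕ := hyperfilter ℕ
  have hU : (U : Filter ℕ) ≤ atTop := Nat.hyperfilter_le_atTop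
  let m0 : (up U M).W := Quotient.mk (upS U fun l => (M l).W) m
  let n0 : (up U N).W := Quotient.mk (upS U fun l => (N l).W) n
  have om := out_mk U (fun l => (M l).W) m
  have on := out_mk U (fun l => (N l).W) n
  have key := general_case φ hfree hinv (up_Z U hU (props φ) M N) m0 n0 (by
    refine ⟨0, ?_⟩
    filter_upwards [om, on] with l h1 h2
    have := hz l
    rw [← h1, ← h2] at this
    exact this)
  rw [satAt_iff φ hfree _ m0 (fun _ => m0) rfl, satAt_iff φ hfree _ n0 (fun _ => n0) rfl,
    los, los] at key
  have hm' : ∀ᶠ l in (U : Filter ℕ), FOSat (M l) (fun _ => m0.out l) φ := by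
    filter_upwards [om] with l h1
    exact hm l _ h1
  obtain ⟨l, h1, h2⟩ := ((key.1 hm').and on).exists
  exact hn l ((satAt_iff φ hfree (N l) (n l) _ h2).2 h1)

end HT

/-- Hodkinson–Tahiri. For a hybrid signature without nominals, a
first-order formula `φ(x)` is equivalent to the standard translation of a hybrid sentence
of the `{↓}`-fragment iff it is invariant under quasi-injective bisimulations. -/
theorem hodkinson_tahiri_characterisation {P : Type}
    (φ : FOForm P Empty FVar) (hfree : φ.free ⊆ {Sum.inr false}) :
    (∃ ψ : HForm P Empty, ψ.inFragment {Feature.bind} ∧ ψ.free = ∅ ∧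
       ∀ (M : Kripke P Empty) (g : FVar → M.W), FOSat M g φ ↔ FOSat M g (stdTr false ψ)) ↔
    (∀ (M N : Kripke P Empty) (B : M.W → N.W → Prop),
       IsBisim M N B → QuasiInjective M N B →
       ∀ (m : M.W) (n : N.W), B m n → (FOSatAt M m φ ↔ FOSatAt N n φ)) := by
  constructor
  · rintro ⟨ψ, hf, hfr, h⟩ M N B hB hq m n hb
    rw [HT.satAt_iff φ hfree M m (fun _ => m) rfl, HT.satAt_iff φ hfree N n (fun _ => n) rfl,
      h, h, HT.hsat_std, HT.hsat_std]
    apply HT.hsat_inv M N B hB hq ψ hf _ _ m n hb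
    intro x hx
    rw [hfr] at hx
    exact absurd hx (Set.notMem_empty x)
  · exact HT.hard φ hfree
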